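/- Let f₁,…,f_n be monotone linear functions that are not colinear. Then every locally optimal permutation of [n] for f₁,…,f_n is counterclockwise. -/

import Mathlib

/-- A linear function `x ↦ a*x + b`. -/
structure LinFun where
  a : ℝ
  b : ℝ

namespace LinFun

/-- Evaluation of a linear function. -/
def eval (f : LinFun) (x : ℝ) : ℝ := f.a * x + f.b

/-- Composition: `h.comp g` is the linear function `x ↦ h (g x)`. -/
def comp (h g : LinFun) : LinFun := ⟨h.a * g.a, h.a * g.b + h.b⟩

/-- The identical linear function `x ↦ x`. -/
def idf : LinFun := ⟨1, 0⟩

/-- `f` is the identical function (equivalently, its vector `(β f, 1 - α f)` is `(0,0)`,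
i.e. its angle is `⊥`). -/
def IsId (f : LinFun) : Prop := f = idf

/-- The Euclidean norm of the vector `(β f, 1 - α f)` associated to `f`. -/
noncomputable def vecNorm (f : LinFun) : ℝ := Real.sqrt (f.b ^ 2 + (1 - f.a) ^ 2)

/-- The polar angle in `[0, 2π)` of the vector `(β f, 1 - α f)` associated to `f`
(meaningful only when `f` is not identical). -/
noncomputable def theta (f : LinFun) : ℝ :=
  if 0 ≤ Complex.arg ⟨f.b, 1 - f.a⟩ then Complex.arg ⟨f.b, 1 - f.a⟩
  else Complex.arg ⟨f.b, 1 - f.a⟩ + 2 * Real.pi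

end LinFun

/-- Congruence of angles modulo `2π`: `x ≡_{2π} y`. -/
def Cong (x y : ℝ) : Prop := ∃ k : ℤ, x - y = 2 * Real.pi * k

/-- The set `[t1, t2]_{2π}`. -/
def Icc2pi (t1 t2 : ℝ) : Set ℝ :=
  {θ | ∃ l1 l2 : ℝ, Cong l1 t1 ∧ Cong l2 t2 ∧ 0 ≤ l2 - l1 ∧ l2 - l1 < 2 * Real.pi ∧
    θ ∈ Set.Icc l1 l2}

/-- The set `(t1, t2)_{2π}`. -/
def Ioo2pi (t1 t2 : ℝ) : Set ℝ :=
  {θ | ∃ l1 l2 : ℝ, Cong l1 t1 ∧ Cong l2 t2 ∧ 0 ≤ l2 - l1 ∧ l2 - l1 < 2 * Real.pi ∧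
    θ ∈ Set.Ioo l1 l2}

/-- Composite of a list of linear functions: `compList [g₁, …, g_m] = g_m ∘ ⋯ ∘ g₁`. -/
def compList (L : List LinFun) : LinFun := L.foldl (fun acc g => g.comp acc) LinFun.idf

/-- The list `f_{σ(1)}, …, f_{σ(n)}` (0-indexed positions). -/
def permList {n : ℕ} (f : Fin n → LinFun) (σ : Equiv.Perm (Fin n)) : List LinFun :=
  List.ofFn fun i => f (σ i)

/-- `f^σ = f_{σ(n)} ∘ ⋯ ∘ f_{σ(1)}`. -/
def permComp {n : ℕ} (f : Fin n → LinFun) (σ : Equiv.Perm (Fin n)) : LinFun :=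
  compList (permList f σ)

/-- The composite of the functions at the (0-indexed) positions `a, a+1, …, b` of `σ`:
`f_{σ(b)} ∘ ⋯ ∘ f_{σ(a)}` (in 0-indexed notation). -/
def segComp {n : ℕ} (f : Fin n → LinFun) (σ : Equiv.Perm (Fin n)) (a b : ℕ) : LinFun :=
  compList (((permList f σ).drop a).take (b + 1 - a))

/-- The composite corresponding to the `k`-shift `σ_k` of `σ`:
`f^{σ_k} = f_{σ(k)} ∘ ⋯ ∘ f_{σ(1)} ∘ f_{σ(n)} ∘ ⋯ ∘ f_{σ(k+1)}` (1-indexed notation). -/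
def shiftComp {n : ℕ} (f : Fin n → LinFun) (σ : Equiv.Perm (Fin n)) (k : ℕ) : LinFun :=
  compList ((permList f σ).rotate k)

/-- `σ` is a minimum (optimal) permutation for `f₁, …, f_n`. -/
def IsMinimum {n : ℕ} (f : Fin n → LinFun) (σ : Equiv.Perm (Fin n)) : Prop :=
  ∀ ρ : Equiv.Perm (Fin n), (permComp f σ).b ≤ (permComp f ρ).b

/-- `μ` belongs to the neighbourhood `N(σ)`: it is obtained from `σ` by swapping two
adjacent blocks of positions, `(l, …, m)` and `(m+1, …, r)` (0-indexed, `l ≤ m < r < n`). -/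
def InNbhd {n : ℕ} (σ μ : Equiv.Perm (Fin n)) : Prop :=
  ∃ (l m r : ℕ) (_ : l ≤ m) (_ : m < r) (_ : r < n),
    (∀ i : Fin n, (i.val < l ∨ r < i.val) → μ i = σ i) ∧
    (∀ i : Fin n, ∀ _ : l ≤ i.val, ∀ _ : i.val < l + r - m,
      μ i = σ ⟨i.val + m + 1 - l, by omega⟩) ∧
    (∀ i : Fin n, ∀ _ : l + r - m ≤ i.val, ∀ _ : i.val ≤ r,
      μ i = σ ⟨i.val + m - r, by omega⟩)

/-- `σ` is locally optimal for `f₁, …, f_n`. -/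
def LocallyOptimal {n : ℕ} (f : Fin n → LinFun) (σ : Equiv.Perm (Fin n)) : Prop :=
  ∀ μ : Equiv.Perm (Fin n), InNbhd σ μ → (permComp f σ).b ≤ (permComp f μ).b

/-- `σ` is counterclockwise: ignoring the identical functions, some rotation of the sequence
of angles `θ(f_{σ(1)}), …, θ(f_{σ(n)})` is nondecreasing. -/
def Counterclockwise {n : ℕ} (f : Fin n → LinFun) (σ : Equiv.Perm (Fin n)) : Prop :=
  ∃ c : ℕ, ∀ i j : Fin n, ¬ (f (σ i)).IsId → ¬ (f (σ j)).IsId →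
    ((c ≤ i.val ∧ i ≤ j) ∨ (i ≤ j ∧ j.val < c) ∨ (c ≤ i.val ∧ j.val < c)) →
    (f (σ i)).theta ≤ (f (σ j)).theta

/-- `f₁, …, f_n` are colinear: all vectors lie on one line through the origin. -/
def Colinear {n : ℕ} (f : Fin n → LinFun) : Prop :=
  ∃ lam : ℝ, ∀ i : Fin n,
    (f i).IsId ∨ Cong ((f i).theta) lam ∨ Cong ((f i).theta) (lam + Real.pi)

/-- `f₁, …, f_n` are potentially identical: some counterclockwise permutation composes
to the identical function. -/
def PotentiallyIdentical {n : ℕ} (f : Fin n → LinFun) : Prop :=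
  ∃ σ : Equiv.Perm (Fin n), Counterclockwise f σ ∧ (permComp f σ).IsId

/-- The ε-perturbation `f^{(ε)}` of a linear function. -/
noncomputable def epsPert (f : LinFun) (ε : ℝ) : LinFun := if f.a = 0 then ⟨ε, f.b⟩ else f

/-!
The composites `F k` of the first `k` functions of `σ` give the points `P k = vec (F k) / α (F k)`
of the plane, and `P (k + 1) - P k` is a positive multiple of the vector of the next function.
Swapping two adjacent blocks with composites `g` and then `h` increases `β (f^σ)` by a positive
multiple of the cross product of `vec g` and `vec h`, so local optimality says that all triangles
`P i, P j, P k` with `i ≤ j ≤ k` are traversed counterclockwise, i.e. that `P` is a convex polygon,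
possibly degenerate. Started from a lowest vertex, such a polygon has edges of nondecreasing polar
angle: the angle could only drop when an ascending edge follows a descending one, and convexity then
squeezes the whole polygon onto a line, making the functions colinear.
-/

/-! ### The cross product and polar angles in the plane -/

/-- The cross product (determinant) of two plane vectors. -/
def cross (u v : ℂ) : ℝ := u.re * v.im - u.im * v.re

theorem cross_swap (u v : ℂ) : cross u v = -cross v u := by
  simp only [cross]
  ring

theorem cross_neg_neg (u v : ℂ) : cross (-u) (-v) = cross u v := by
  simp only [cross, Complex.neg_re, Complex.neg_im]
  ring

theorem cross_smul_smul (r s : ℝ) (u v : ℂ) : cross (r • u) (s • v) = r * s * cross u v := by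
  simp only [cross, Complex.real_smul, Complex.re_ofReal_mul, Complex.im_ofReal_mul]
  ring

theorem cross_smul_add_cross_smul_add_cross_smul (u v w : ℂ) :
    cross u v • w + cross v w • u + cross w u • v = 0 := by
  apply Complex.ext <;>
  · simp only [cross, Complex.add_re, Complex.add_im, Complex.smul_re, Complex.smul_im,
      smul_eq_mul, Complex.zero_re, Complex.zero_im]
    ring

theorem exists_eq_smul_of_cross_eq_zero {u v : ℂ} (hu : u ≠ 0) (huv : cross u v = 0) :
    ∃ r : ℝ, v = r • u := by
  refine ⟨(v / u).re, ?_⟩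
  have him : (v / u).im = 0 := by
    rw [Complex.div_im, ← sub_div, div_eq_zero_iff]
    left
    simp only [cross] at huv
    linarith
  have hreal : ((v / u).re : ℂ) = v / u := Complex.ext rfl him.symm
  rw [Complex.real_smul, hreal, div_mul_cancel₀ v hu]

theorem collinear_of_cross_sub_eq_zero {u : ℂ} (hu : u ≠ 0) (p₀ : ℂ) {s : Set ℂ}
    (hs : ∀ p ∈ s, cross u (p - p₀) = 0) : Collinear ℝ s := by
  rw [collinear_iff_exists_forall_eq_smul_vadd]
  refine ⟨p₀, u, fun p hp => ?_⟩
  obtain ⟨r, hr⟩ := exists_eq_smul_of_cross_eq_zero hu (hs p hp)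
  exact ⟨r, by rw [← hr, vadd_eq_add, sub_add_cancel]⟩

/-- The polar angle of a plane vector in `[0, 2π)`, in the form used by `LinFun.theta`; the zero
vector has polar angle `0`. -/
noncomputable def polarAngle (z : ℂ) : ℝ :=
  if 0 ≤ Complex.arg z then Complex.arg z else Complex.arg z + 2 * Real.pi

theorem polarAngle_coe_angle (z : ℂ) : (polarAngle z : Real.Angle) = Complex.arg z := by
  unfold polarAngle
  split_ifs <;> simp

theorem polarAngle_nonneg (z : ℂ) : 0 ≤ polarAngle z := by
  have := Complex.neg_pi_lt_arg z
  unfold polarAngle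
  split_ifs <;> linarith [Real.pi_pos]

theorem polarAngle_lt_two_pi (z : ℂ) : polarAngle z < 2 * Real.pi := by
  have := Complex.arg_le_pi z
  unfold polarAngle
  split_ifs <;> linarith [Real.pi_pos]

theorem polarAngle_smul_of_pos {r : ℝ} (hr : 0 < r) (z : ℂ) :
    polarAngle (r • z) = polarAngle z := by
  simp only [polarAngle, Complex.real_smul, Complex.arg_real_mul z hr]

theorem cross_eq_norm_mul_norm_mul_sin (u v : ℂ) :
    cross u v = ‖u‖ * ‖v‖ * Real.sin (polarAngle v - polarAngle u) := by
  have hsin (z : ℂ) : Real.sin (polarAngle z) = Real.sin (Complex.arg z) := by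
    rw [← Real.Angle.sin_coe, polarAngle_coe_angle, Real.Angle.sin_coe]
  have hcos (z : ℂ) : Real.cos (polarAngle z) = Real.cos (Complex.arg z) := by
    rw [← Real.Angle.cos_coe, polarAngle_coe_angle, Real.Angle.cos_coe]
  rw [Real.sin_sub, hsin, hsin, hcos, hcos, cross, ← Complex.norm_mul_cos_arg u,
    ← Complex.norm_mul_sin_arg u, ← Complex.norm_mul_cos_arg v, ← Complex.norm_mul_sin_arg v]
  ring

/-- The half-open upper half plane of vectors with polar angle in `[0, π)`, zero included. It is the
nonnegative cone of the order on the plane that compares imaginary parts first, then real parts. -/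
def IsUpper (z : ℂ) : Prop := 0 < z.im ∨ z.im = 0 ∧ 0 ≤ z.re

namespace IsUpper

variable {u v : ℂ}

theorem add (hu : IsUpper u) (hv : IsUpper v) : IsUpper (u + v) := by
  simp only [IsUpper, Complex.add_im, Complex.add_re] at *
  grind

theorem smul {r : ℝ} (hr : 0 ≤ r) (hu : IsUpper u) : IsUpper (r • u) := by
  simp only [IsUpper, Complex.smul_im, Complex.smul_re, smul_eq_mul] at *
  rcases hr.eq_or_lt with rfl | hr
  · simp
  · rcases hu with him | ⟨him, hre⟩
    · exact Or.inl (mul_pos hr him)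
    · exact Or.inr ⟨by rw [him, mul_zero], mul_nonneg hr.le hre⟩

theorem neg_of_not (hu : ¬IsUpper u) : IsUpper (-u) := by
  simp only [IsUpper, Complex.neg_im, Complex.neg_re] at *
  grind

theorem eq_zero_of_add_eq_zero (hu : IsUpper u) (hv : IsUpper v) (huv : u + v = 0) : u = 0 := by
  obtain rfl : v = -u := (neg_eq_of_add_eq_zero_right huv).symm
  simp only [IsUpper, Complex.neg_im, Complex.neg_re] at *
  apply Complex.ext <;> simp only [Complex.zero_re, Complex.zero_im] <;> grind

end IsUpper

theorem isUpper_iff_polarAngle_lt_pi {z : ℂ} : IsUpper z ↔ polarAngle z < Real.pi := by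
  have hneg := Complex.neg_pi_lt_arg z
  have hlt : z.arg < Real.pi ↔ 0 ≤ z.re ∨ z.im ≠ 0 := Complex.arg_lt_pi_iff
  unfold polarAngle IsUpper
  split_ifs with h
  · rw [hlt]
    have := Complex.arg_nonneg_iff.1 h
    grind
  · rw [Complex.arg_nonneg_iff] at h
    constructor <;> intro <;> grind

theorem polarAngle_le_of_cross_nonneg {u v : ℂ} (hu : u ≠ 0) (hv : v ≠ 0) (huv : 0 ≤ cross u v)
    (hupper : IsUpper v → IsUpper u) : polarAngle u ≤ polarAngle v := by
  by_contra! hlt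
  have hnear : polarAngle u - polarAngle v < Real.pi := by
    simp only [isUpper_iff_polarAngle_lt_pi] at hupper
    by_contra! hfar
    linarith [hupper (by linarith [polarAngle_lt_two_pi u]), polarAngle_nonneg v]
  have hsin : 0 < Real.sin (polarAngle u - polarAngle v) :=
    Real.sin_pos_of_pos_of_lt_pi (sub_pos.2 hlt) hnear
  rw [cross_swap, cross_eq_norm_mul_norm_mul_sin] at huv
  have := mul_pos (mul_pos (norm_pos_iff.2 hv) (norm_pos_iff.2 hu)) hsin
  linarith

-- If `u`, `v`, `w` lie in a half plane and each successive cross product is nonnegative, the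
-- Plücker relation is a vanishing sum of vectors of a salient cone, hence vanishes termwise.
theorem cross_eq_zero_of_isUpper {u v w : ℂ} (hu : IsUpper u) (hv : IsUpper v) (hw : IsUpper w)
    (hw₀ : w ≠ 0) (huv : 0 ≤ cross u v) (hvw : 0 ≤ cross v w) (hwu : 0 ≤ cross w u) :
    cross u v = 0 := by
  have hsum := cross_smul_add_cross_smul_add_cross_smul u v w
  rw [add_assoc] at hsum
  have hterm := (hw.smul huv).eq_zero_of_add_eq_zero ((hu.smul hvw).add (hv.smul hwu)) hsum
  exact (smul_eq_zero.1 hterm).resolve_right hw₀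

/-! ### Convex paths -/

/-- Twice the signed area of the triangle `p q r`; it is nonnegative when the triangle is traversed
counterclockwise. -/
def orient (p q r : ℂ) : ℝ := cross (q - p) (r - p)

theorem orient_rotate (p q r : ℂ) : orient q r p = orient p q r := by
  simp only [orient, cross, Complex.sub_re, Complex.sub_im]
  ring

theorem orient_eq_cross_sub_mid (p q r : ℂ) : orient p q r = cross (r - q) (p - q) :=
  (orient_rotate p q r).symm

theorem orient_eq_cross_sub_last (p q r : ℂ) : orient p q r = cross (p - r) (q - r) :=
  orient_rotate r p q

theorem orient_eq_cross_edges (p q r : ℂ) : orient p q r = cross (q - p) (r - q) := by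
  simp only [orient, cross, Complex.sub_re, Complex.sub_im]
  ring

/-- The vertices `P 0, …, P n` are, in this order, the vertices of a (possibly degenerate) convex
polygon traversed counterclockwise. -/
def IsConvexPath (P : ℕ → ℂ) (n : ℕ) : Prop :=
  ∀ i j k, i ≤ j → j ≤ k → k ≤ n → 0 ≤ orient (P i) (P j) (P k)

theorem monotoneOn_of_forall_consecutive {α β : Type*} [PartialOrder α] [LocallyFiniteOrder α]
    [Preorder β] {s : Set α} {g : α → β}
    (h : ∀ a ∈ s, ∀ b ∈ s, a < b → (∀ x ∈ s, a < x → ¬x < b) → g a ≤ g b) : MonotoneOn g s := by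
  classical
  rw [Set.monotoneOn_iff_monotone, monotone_iff_forall_covBy]
  rintro ⟨a, ha⟩ ⟨b, hb⟩ ⟨hab, hgap⟩
  exact h a ha b hb hab fun x hx => hgap (c := ⟨x, hx⟩)

theorem exists_lowest (P : ℕ → ℂ) (n : ℕ) : ∃ c ≤ n, ∀ k ≤ n, IsUpper (P k - P c) := by
  obtain ⟨c, hc, hmin⟩ := (Finset.range (n + 1)).exists_min_image
    (fun k => toLex ((P k).im, (P k).re)) Finset.nonempty_range_add_one
  refine ⟨c, Finset.mem_range_succ_iff.1 hc, fun k hk => ?_⟩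
  have := hmin k (Finset.mem_range_succ_iff.2 hk)
  simp only [Prod.Lex.toLex_le_toLex] at this
  simp only [IsUpper, Complex.sub_im, Complex.sub_re]
  grind

/-- The closed path `P c, …, P n, P 0, …, P c`, indexed by `0, …, n + 1`. -/
def rotatePath (P : ℕ → ℂ) (n c k : ℕ) : ℂ := if c + k ≤ n then P (c + k) else P (c + k - (n + 1))

theorem rotatePath_mem_image {P : ℕ → ℂ} {n c k : ℕ} (hc : c ≤ n) (hk : k ≤ n + 1) :
    rotatePath P n c k ∈ P '' Set.Iic n := by
  unfold rotatePath
  split_ifs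
  · exact ⟨_, ‹_›, rfl⟩
  · exact ⟨_, by simp only [Set.mem_Iic]; lia, rfl⟩

/-- The index at which `rotatePath P n c` visits `P i`. -/
def rotateIndex (n c i : ℕ) : ℕ := if c ≤ i then i - c else i + (n + 1) - c

theorem rotateIndex_le {n c i : ℕ} (hi : i ≤ n) : rotateIndex n c i ≤ n := by
  unfold rotateIndex
  split_ifs <;> lia

theorem rotatePath_rotateIndex (P : ℕ → ℂ) {n c i : ℕ} (hc : c ≤ n) (hi : i ≤ n) :
    rotatePath P n c (rotateIndex n c i) = P i := by
  unfold rotatePath rotateIndex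
  split_ifs <;> first | lia | (congr 1; lia)

theorem rotatePath_rotateIndex_add_one (P : ℕ → ℂ) {n c i : ℕ} (hc : c ≤ n) (hi : i < n) :
    rotatePath P n c (rotateIndex n c i + 1) = P (i + 1) := by
  unfold rotatePath rotateIndex
  split_ifs <;> first | lia | (congr 1; lia)

theorem image_subset_image_rotatePath (P : ℕ → ℂ) {n c : ℕ} (hc : c ≤ n) :
    P '' Set.Iic n ⊆ rotatePath P n c '' Set.Iic (n + 1) := by
  rintro _ ⟨i, hi, rfl⟩
  exact ⟨rotateIndex n c i, Nat.le_succ_of_le (rotateIndex_le hi), rotatePath_rotateIndex P hc hi⟩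

namespace IsConvexPath

variable {P : ℕ → ℂ} {n : ℕ}

theorem orient_nonneg_of_cyclic (hP : IsConvexPath P n) {i j k : ℕ} (hi : i ≤ n) (hj : j ≤ n)
    (hk : k ≤ n) (hijk : i ≤ j ∧ j ≤ k ∨ j ≤ k ∧ k ≤ i ∨ k ≤ i ∧ i ≤ j) :
    0 ≤ orient (P i) (P j) (P k) := by
  rcases hijk with ⟨hij, hjk⟩ | ⟨hjk, hki⟩ | ⟨hki, hij⟩
  · exact hP i j k hij hjk hk
  · rw [← orient_rotate]
    exact hP j k i hjk hki hi
  · rw [orient_rotate (P k)]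
    exact hP k i j hki hij hj

theorem orient_edge_nonneg (hP : IsConvexPath P n) {i k : ℕ} (hi : i < n) (hk : k ≤ n) :
    0 ≤ orient (P k) (P i) (P (i + 1)) :=
  hP.orient_nonneg_of_cyclic hk (by lia) (by lia) (by lia)

theorem rotate (hP : IsConvexPath P n) {c : ℕ} (hc : c ≤ n) :
    IsConvexPath (rotatePath P n c) (n + 1) := by
  intro i j k hij hjk hk
  unfold rotatePath
  split_ifs <;> apply hP.orient_nonneg_of_cyclic <;> lia

-- The edges `P i → P (i + 1) = P j → P (j + 1)` descend and then ascend although the path starts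
-- from a lowest vertex, which squeezes the two edges onto one line.
theorem cross_eq_zero_of_valley (hP : IsConvexPath P n) (hlow : ∀ k ≤ n, IsUpper (P k - P 0))
    {i j : ℕ} (hij : i < j) (hj : j < n) (heq : P j = P (i + 1))
    (hdown : IsUpper (P i - P j)) (hup : IsUpper (P (j + 1) - P j)) :
    cross (P (j + 1) - P j) (P i - P j) = 0 := by
  have hlow_down : 0 ≤ cross (P i - P j) (P j - P 0) := by
    have := hP 0 i (i + 1) (by lia) (by lia) (by lia)
    rwa [← heq, ← orient_rotate, orient_eq_cross_edges, ← cross_neg_neg, neg_sub, neg_sub] at this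
  have hlow_up : 0 ≤ cross (P j - P 0) (P (j + 1) - P j) := by
    rw [← orient_eq_cross_edges]
    exact hP 0 j (j + 1) (by lia) (by lia) (by lia)
  have hdown_up : 0 ≤ cross (P (j + 1) - P j) (P i - P j) := by
    rw [← orient_eq_cross_sub_mid, heq]
    exact hP i (i + 1) (j + 1) (by lia) (by lia) (by lia)
  rcases eq_or_ne (P j) (P 0) with hlowest | hlowest
  · refine le_antisymm ?_ hdown_up
    rw [cross_swap, Left.neg_nonpos_iff, hlowest]
    exact hP 0 i (j + 1) (by lia) (by lia) (by lia)
  · exact cross_eq_zero_of_isUpper hup hdown (hlow j hj.le) (sub_ne_zero.2 hlowest)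
      hdown_up hlow_down hlow_up

theorem collinear_of_valley (hP : IsConvexPath P n) (hlow : ∀ k ≤ n, IsUpper (P k - P 0))
    {i j : ℕ} (hij : i < j) (hj : j < n) (heq : P j = P (i + 1))
    (hdown : IsUpper (P i - P j)) (hup : IsUpper (P (j + 1) - P j))
    (hdown₀ : P i - P j ≠ 0) (hup₀ : P (j + 1) - P j ≠ 0) :
    Collinear ℝ (P '' Set.Iic n) := by
  refine collinear_of_cross_sub_eq_zero hdown₀ (P j) ?_
  rintro _ ⟨k, hk, rfl⟩
  have hleft_down : 0 ≤ cross (P k - P j) (P i - P j) := by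
    rw [← orient_eq_cross_sub_last, heq]
    exact hP.orient_edge_nonneg (hij.trans hj) hk
  have hleft_up : 0 ≤ cross (P (j + 1) - P j) (P k - P j) := by
    rw [← orient_eq_cross_sub_mid]
    exact hP.orient_edge_nonneg hj hk
  have hsum := cross_smul_add_cross_smul_add_cross_smul (P k - P j) (P i - P j) (P (j + 1) - P j)
  have hparallel : cross (P i - P j) (P (j + 1) - P j) = 0 := by
    rw [cross_swap, hP.cross_eq_zero_of_valley hlow hij hj heq hdown hup, neg_zero]
  rw [hparallel, zero_smul, add_zero] at hsum
  have hterm := (hup.smul hleft_down).eq_zero_of_add_eq_zero (hdown.smul hleft_up) hsum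
  rw [cross_swap, (smul_eq_zero.1 hterm).resolve_right hup₀, neg_zero]

theorem polarAngle_le_of_adjacent (hP : IsConvexPath P n) (hlow : ∀ k ≤ n, IsUpper (P k - P 0))
    (hncol : ¬Collinear ℝ (P '' Set.Iic n)) {i j : ℕ} (hij : i < j) (hj : j < n)
    (heq : P j = P (i + 1)) (hi₀ : P (i + 1) ≠ P i) (hj₀ : P (j + 1) ≠ P j) :
    polarAngle (P (i + 1) - P i) ≤ polarAngle (P (j + 1) - P j) := by
  refine polarAngle_le_of_cross_nonneg (sub_ne_zero.2 hi₀) (sub_ne_zero.2 hj₀) ?_ fun hup => ?_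
  · rw [heq, ← orient_eq_cross_edges]
    exact hP i (i + 1) (j + 1) (by lia) (by lia) (by lia)
  · by_contra hdown
    refine hncol (hP.collinear_of_valley hlow hij hj heq ?_ hup ?_ (sub_ne_zero.2 hj₀))
    · rw [heq, ← neg_sub]
      exact IsUpper.neg_of_not hdown
    · rw [heq, sub_ne_zero]
      exact hi₀.symm

theorem monotoneOn_polarAngle (hP : IsConvexPath P n) (hlow : ∀ k ≤ n, IsUpper (P k - P 0))
    (hncol : ¬Collinear ℝ (P '' Set.Iic n)) :
    MonotoneOn (fun k => polarAngle (P (k + 1) - P k)) {k | k < n ∧ P (k + 1) ≠ P k} := by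
  refine monotoneOn_of_forall_consecutive ?_
  rintro i ⟨-, hi₀⟩ j ⟨hj, hj₀⟩ hij hgap
  have hconst (k : ℕ) (hik : i + 1 ≤ k) (hkj : k ≤ j) : P k = P (i + 1) := by
    induction k, hik using Nat.le_induction with
    | base => rfl
    | succ k hik ih =>
      by_contra hne
      exact hgap k ⟨by lia, by rwa [ih (by lia)]⟩ hik hkj
  exact hP.polarAngle_le_of_adjacent hlow hncol hij hj (hconst j hij le_rfl) hi₀ hj₀

theorem exists_cyclic_polarAngle_le (hP : IsConvexPath P n)
    (hncol : ¬Collinear ℝ (P '' Set.Iic n)) :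
    ∃ c, ∀ i < n, ∀ j < n, P (i + 1) ≠ P i → P (j + 1) ≠ P j →
      (c ≤ i ∧ i ≤ j ∨ i ≤ j ∧ j < c ∨ c ≤ i ∧ j < c) →
      polarAngle (P (i + 1) - P i) ≤ polarAngle (P (j + 1) - P j) := by
  obtain ⟨c, hc, hlow⟩ := exists_lowest P n
  have hncol_rotate : ¬Collinear ℝ (rotatePath P n c '' Set.Iic (n + 1)) :=
    mt (Collinear.subset (image_subset_image_rotatePath P hc)) hncol
  have hlow_rotate (k : ℕ) (hk : k ≤ n + 1) :
      IsUpper (rotatePath P n c k - rotatePath P n c 0) := by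
    obtain ⟨l, hl, hkl⟩ := rotatePath_mem_image (P := P) hc hk
    have hzero : rotatePath P n c 0 = P c := if_pos hc
    rw [← hkl, hzero]
    exact hlow l hl
  have hmono := (hP.rotate hc).monotoneOn_polarAngle hlow_rotate hncol_rotate
  refine ⟨c, fun i hi j hj hi₀ hj₀ hij => ?_⟩
  have hmem {l : ℕ} (hl : l < n) (hl₀ : P (l + 1) ≠ P l) :
      rotateIndex n c l ∈ {k | k < n + 1 ∧ rotatePath P n c (k + 1) ≠ rotatePath P n c k} := by
    refine ⟨Nat.lt_succ_of_le (rotateIndex_le hl.le), ?_⟩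
    rwa [rotatePath_rotateIndex_add_one P hc hl, rotatePath_rotateIndex P hc hl.le]
  have hle : rotateIndex n c i ≤ rotateIndex n c j := by
    unfold rotateIndex
    split_ifs <;> lia
  simpa only [rotatePath_rotateIndex_add_one P hc hi, rotatePath_rotateIndex P hc hi.le,
    rotatePath_rotateIndex_add_one P hc hj, rotatePath_rotateIndex P hc hj.le]
    using hmono (hmem hi hi₀) (hmem hj hj₀) hle

end IsConvexPath

/-! ### Prefix composites as vertices of a path -/

namespace LinFun

/-- The vector `vec(f) = (β(f), 1 - α(f))`, as a complex number. -/
def vec (f : LinFun) : ℂ := ⟨f.b, 1 - f.a⟩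

/-- The vector of `f` scaled by `1 / α(f)`, that is, `-vec(f⁻¹)`. The scaling makes the step from
`f` to `g ∘ f` a positive multiple of `vec(g)`. -/
noncomputable def vertex (f : LinFun) : ℂ := f.a⁻¹ • f.vec

theorem theta_eq_polarAngle_vec (f : LinFun) : f.theta = polarAngle f.vec := rfl

theorem vec_eq_zero_iff {f : LinFun} : f.vec = 0 ↔ f.IsId := by
  obtain ⟨a, b⟩ := f
  simp only [vec, Complex.ext_iff, Complex.zero_re, Complex.zero_im, IsId, idf, mk.injEq]
  grind

theorem comp_assoc (f g h : LinFun) : (f.comp g).comp h = f.comp (g.comp h) := by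
  simp only [comp, mk.injEq]
  constructor <;> ring

theorem b_comp_swap_sub (f g h k : LinFun) :
    (k.comp (g.comp (h.comp f))).b - (k.comp (h.comp (g.comp f))).b =
      k.a * cross g.vec h.vec := by
  simp only [comp, cross, vec]
  ring

theorem vertex_comp_sub_vertex {f g : LinFun} (hgf : (g.comp f).a ≠ 0) :
    (g.comp f).vertex - f.vertex = (g.comp f).a⁻¹ • g.vec := by
  have hg : g.a ≠ 0 := left_ne_zero_of_mul hgf
  have hf : f.a ≠ 0 := right_ne_zero_of_mul hgf
  apply Complex.ext <;>
  · simp only [vertex, vec, comp, Complex.sub_re, Complex.sub_im, Complex.smul_re, Complex.smul_im,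
      smul_eq_mul]
    field_simp
    ring

end LinFun

theorem compList_append_singleton (L : List LinFun) (g : LinFun) :
    compList (L ++ [g]) = g.comp (compList L) := by
  simp only [compList, List.foldl_append, List.foldl_cons, List.foldl_nil]

theorem compList_append (L M : List LinFun) :
    compList (L ++ M) = (compList M).comp (compList L) := by
  induction M using List.reverseRecOn with
  | nil => simp [compList, LinFun.idf, LinFun.comp]
  | append_singleton M g ih =>
    rw [← List.append_assoc, compList_append_singleton, ih, compList_append_singleton,
      LinFun.comp_assoc]

theorem compList_a_pos {L : List LinFun} (hL : ∀ g ∈ L, 0 < g.a) : 0 < (compList L).a := by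
  induction L using List.reverseRecOn with
  | nil => exact one_pos
  | append_singleton L g ih =>
    rw [compList_append_singleton]
    exact mul_pos (hL g (by simp)) (ih fun h hh => hL h (by simp [hh]))

/-- The permutation of positions that exchanges the blocks `l, …, m` and `m + 1, …, r`: position `i`
receives the entry at position `blockSwap i`. -/
noncomputable def blockSwap {n l m r : ℕ} (hlm : l ≤ m) (hmr : m < r) (hrn : r < n) :
    Equiv.Perm (Fin n) :=
  let t (i : Fin n) : Fin n :=
    if _ : i < l ∨ r < i then i
    else if _ : i < l + r - m then ⟨i + m + 1 - l, by lia⟩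
    else ⟨i + m - r, by lia⟩
  Equiv.ofBijective t <| Finite.injective_iff_bijective.1 <| by
    intro i j hij
    simp only [t] at hij
    split_ifs at hij <;> simp only [Fin.ext_iff] at hij ⊢ <;> lia

section Perm

variable {n : ℕ} (f : Fin n → LinFun) (σ : Equiv.Perm (Fin n))

section BlockSwap

variable {l m r : ℕ} (hlm : l ≤ m) (hmr : m < r) (hrn : r < n)

theorem inNbhd_mul_blockSwap : InNbhd σ (σ * blockSwap hlm hmr hrn) := by
  refine ⟨l, m, r, hlm, hmr, hrn, fun i hi => ?_, fun i hli him => ?_, fun i hmi hir => ?_⟩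
  · simp [blockSwap, hi]
  · simp [blockSwap, him, hli, show ¬r < (i : ℕ) by lia]
  · simp [blockSwap, hmi, show ¬(i : ℕ) < l by lia, show ¬r < (i : ℕ) by lia]

theorem permList_mul_blockSwap {A B C D : List LinFun} (hσ : permList f σ = A ++ (B ++ (C ++ D)))
    (hA : A.length = l) (hB : B.length = m + 1 - l) (hC : C.length = r - m) :
    permList f (σ * blockSwap hlm hmr hrn) = A ++ (C ++ (B ++ D)) := by
  have hn : n = A.length + (B.length + (C.length + D.length)) := by
    simpa [permList] using congrArg List.length hσ
  have hlt (i : Fin n) : (i : ℕ) < (A ++ (B ++ (C ++ D))).length := by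
    simpa only [List.length_append, ← hn] using i.is_lt
  have hget (i : Fin n) : f (σ i) = (A ++ (B ++ (C ++ D)))[i]'(hlt i) := by
    simp [← hσ, permList]
  apply List.ext_getElem
  · simp only [permList, List.length_ofFn, List.length_append]
    lia
  · intro i hi hi'
    simp only [permList, List.getElem_ofFn, Equiv.Perm.mul_apply, hget, blockSwap,
      Equiv.ofBijective_apply]
    split_ifs <;> simp only [Fin.getElem_fin] <;> grind

end BlockSwap

variable {f σ}

theorem a_pos_of_mem_permList (hf : ∀ i, 0 < (f i).a) {g : LinFun} (hg : g ∈ permList f σ) :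
    0 < g.a := by
  obtain ⟨i, rfl⟩ := List.mem_ofFn.1 hg
  exact hf (σ i)

theorem LocallyOptimal.cross_vec_nonneg (hlo : LocallyOptimal f σ) (hf : ∀ i, 0 < (f i).a)
    {A B C D : List LinFun} (hσ : permList f σ = A ++ (B ++ (C ++ D))) :
    0 ≤ cross (compList B).vec (compList C).vec := by
  rcases eq_or_ne B [] with rfl | hB
  · simp [compList, LinFun.vec, LinFun.idf, cross]
  rcases eq_or_ne C [] with rfl | hC
  · simp [compList, LinFun.vec, LinFun.idf, cross]
  rw [← List.length_pos_iff] at hB hC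
  have hn : n = A.length + (B.length + (C.length + D.length)) := by
    simpa [permList] using congrArg List.length hσ
  have hlm : A.length ≤ A.length + B.length - 1 := by lia
  have hmr : A.length + B.length - 1 < A.length + B.length + C.length - 1 := by lia
  have hrn : A.length + B.length + C.length - 1 < n := by lia
  have hle := hlo _ (inNbhd_mul_blockSwap σ hlm hmr hrn)
  rw [permComp, permComp, permList_mul_blockSwap f σ hlm hmr hrn hσ rfl (by lia) (by lia), hσ,
    ← sub_nonneg] at hle
  simp only [compList_append, LinFun.comp_assoc, LinFun.b_comp_swap_sub] at hle
  have hD : 0 < (compList D).a :=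
    compList_a_pos fun g hg => a_pos_of_mem_permList (σ := σ) hf (by simp [hσ, hg])
  exact (mul_nonneg_iff_of_pos_left hD).1 hle

variable (f σ) in
/-- The vertex of the composite of the first `k` functions of `σ`. -/
noncomputable def prefixVertex (k : ℕ) : ℂ := (compList ((permList f σ).take k)).vertex

theorem compList_take_a_pos (hf : ∀ i, 0 < (f i).a) (k : ℕ) :
    0 < (compList ((permList f σ).take k)).a :=
  compList_a_pos fun _ hg => a_pos_of_mem_permList hf (List.mem_of_mem_take hg)

theorem LocallyOptimal.isConvexPath_prefixVertex (hlo : LocallyOptimal f σ)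
    (hf : ∀ i, 0 < (f i).a) : IsConvexPath (prefixVertex f σ) n := by
  rintro i j k hij hjk -
  obtain ⟨p, rfl⟩ := Nat.exists_eq_add_of_le hij
  obtain ⟨q, rfl⟩ := Nat.exists_eq_add_of_le hjk
  have hj := compList_take_a_pos (σ := σ) hf (i + p)
  have hk := compList_take_a_pos (σ := σ) hf (i + p + q)
  have hcross := hlo.cross_vec_nonneg hf (A := (permList f σ).take i)
    (B := ((permList f σ).drop i).take p) (C := ((permList f σ).drop (i + p)).take q)
    (D := (permList f σ).drop (i + p + q))
    (by rw [← List.append_assoc, ← List.append_assoc, ← List.take_add, ← List.take_add,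
      List.take_append_drop])
  simp only [prefixVertex, orient_eq_cross_edges]
  rw [List.take_add (i := i + p), compList_append] at hk ⊢
  rw [LinFun.vertex_comp_sub_vertex hk.ne']
  rw [List.take_add (i := i), compList_append] at hj hk ⊢
  rw [LinFun.vertex_comp_sub_vertex hj.ne', cross_smul_smul]
  exact mul_nonneg (mul_nonneg (inv_nonneg.2 hj.le) (inv_nonneg.2 hk.le)) hcross

theorem prefixVertex_add_one_sub (hf : ∀ i, 0 < (f i).a) (i : Fin n) :
    ∃ r > 0, prefixVertex f σ (i + 1) - prefixVertex f σ i = (r : ℝ) • (f (σ i)).vec := by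
  have htake : (permList f σ).take (i + 1) = (permList f σ).take i ++ [f (σ i)] := by
    rw [List.take_add_one, permList, List.getElem?_ofFn]
    simp
  have hpos := compList_take_a_pos (σ := σ) hf (i + 1)
  refine ⟨_, inv_pos.2 hpos, ?_⟩
  rw [htake, compList_append_singleton] at hpos
  rw [prefixVertex, prefixVertex, htake, compList_append_singleton,
    LinFun.vertex_comp_sub_vertex hpos.ne']

theorem colinear_of_forall_vec_eq_smul (v : ℂ) (hv : ∀ i, ∃ r : ℝ, (f i).vec = r • v) :
    Colinear f := by
  refine ⟨Complex.arg v, fun i => ?_⟩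
  obtain ⟨r, hr⟩ := hv i
  by_cases hid : (f i).vec = 0
  · exact Or.inl (LinFun.vec_eq_zero_iff.1 hid)
  have hv₀ : v ≠ 0 := fun h => hid (by rw [hr, h, smul_zero])
  right
  unfold Cong
  rw [← Real.Angle.angle_eq_iff_two_pi_dvd_sub, ← Real.Angle.angle_eq_iff_two_pi_dvd_sub,
    LinFun.theta_eq_polarAngle_vec, polarAngle_coe_angle, Real.Angle.coe_add,
    ← Complex.arg_neg_coe_angle hv₀, hr]
  rcases lt_trichotomy r 0 with hneg | rfl | hpos
  · right
    rw [← neg_smul_neg, Complex.real_smul, Complex.arg_real_mul _ (neg_pos.2 hneg)]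
  · exact absurd (by rw [hr, zero_smul]) hid
  · left
    rw [Complex.real_smul, Complex.arg_real_mul _ hpos]

theorem not_collinear_prefixVertex (hf : ∀ i, 0 < (f i).a) (hnc : ¬Colinear f) :
    ¬Collinear ℝ (prefixVertex f σ '' Set.Iic n) := by
  intro hcol
  obtain ⟨p₀, v, hv⟩ := (collinear_iff_exists_forall_eq_smul_vadd _).1 hcol
  refine hnc (colinear_of_forall_vec_eq_smul v fun i => ?_)
  obtain ⟨k, rfl⟩ := σ.surjective i
  obtain ⟨r, hr, hstep⟩ := prefixVertex_add_one_sub (σ := σ) hf k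
  obtain ⟨s, hs⟩ := hv _ (Set.mem_image_of_mem _ (Set.mem_Iic.2 k.is_lt.le))
  obtain ⟨t, ht⟩ := hv _ (Set.mem_image_of_mem _ (Set.mem_Iic.2 (Nat.succ_le_of_lt k.is_lt)))
  refine ⟨r⁻¹ * (t - s), ?_⟩
  rw [mul_smul, sub_smul, eq_inv_smul_iff₀ hr.ne', ← hstep, hs, ht, vadd_eq_add, vadd_eq_add,
    add_sub_add_right_eq_sub]

end Perm

/-- locally optimal permutations of non-colinear monotone linear functions
are counterclockwise. -/
theorem stmt7 {n : ℕ} (f : Fin n → LinFun) (hf : ∀ i, 0 < (f i).a)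
    (hnc : ¬ Colinear f) (σ : Equiv.Perm (Fin n)) (hlo : LocallyOptimal f σ) :
    Counterclockwise f σ := by
  obtain ⟨c, hc⟩ := (hlo.isConvexPath_prefixVertex hf).exists_cyclic_polarAngle_le
    (not_collinear_prefixVertex hf hnc)
  have hedge (i : Fin n) (hi : ¬(f (σ i)).IsId) :
      prefixVertex f σ (i + 1) ≠ prefixVertex f σ i ∧
        polarAngle (prefixVertex f σ (i + 1) - prefixVertex f σ i) = (f (σ i)).theta := by
    obtain ⟨r, hr, hstep⟩ := prefixVertex_add_one_sub (σ := σ) hf i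
    rw [← sub_ne_zero, hstep, polarAngle_smul_of_pos hr]
    exact ⟨smul_ne_zero hr.ne' (mt LinFun.vec_eq_zero_iff.1 hi), rfl⟩
  refine ⟨c, fun i j hi hj hij => ?_⟩
  rw [← (hedge i hi).2, ← (hedge j hj).2]
  exact hc i i.is_lt j j.is_lt (hedge i hi).1 (hedge j hj).1 hij
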